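/- Every functional ARext-structure admits a diff-faithful embedding into a functional ARD-structure: given a functional ARext-structure S = (I, E, A), there exist a functional ARD-structure S' = (I', E', A') and an embedding (f, g, h) : S → S' that is diff-faithful, i.e. whenever IsDiff d a b holds in S, IsDiff (f d) (h a) (h b) holds in S'. -/

import Mathlib

universe u v u₁ v₁ u₂ v₂

/-- A function `a : I → E` has *positive support* if it is `⊥` on all negative indices. -/
def PosSupport {I E : Type*} [LinearOrder I] [Zero I] [Bot E] (a : I → E) : Prop :=
  ∀ i : I, i < 0 → a i = ⊥

/-- The *write* operation on arrays-as-functions: update at `i` if `0 ≤ i`, else do nothing. -/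
def wr {I E : Type*} [LinearOrder I] [Zero I] [Bot E] (a : I → E) (i : I) (e : E) : I → E :=
  if 0 ≤ i then Function.update a i e else a

/-- `IsDiff d a b` : `d` is the maxdiff of `a` and `b`, i.e. either `a = b` and `d = 0`,
or `d` is the greatest index at which `a` and `b` differ. -/
def IsDiff {I E : Type*} [LinearOrder I] [Zero I] [Bot E] (d : I) (a b : I → E) : Prop :=
  (a = b ∧ d = 0) ∨ (a d ≠ b d ∧ ∀ j : I, d < j → a j = b j)

/-- A functional structure for the theory ARext of arrays with extensionality over the index
theory TO of linear orders with `0`: an index sort `I`, an element sort `E` with `⊥`, and a set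
`A` of positive-support arrays containing `ε` and closed under writes. -/
structure FunARext : Type (max (u + 1) (v + 1)) where
  I : Type u
  [linOrdI : LinearOrder I]
  [zeroI : Zero I]
  E : Type v
  [botE : Bot E]
  A : Set (I → E)
  posSupport : ∀ a ∈ A, PosSupport a
  eps_mem : (fun _ : I => (⊥ : E)) ∈ A
  wr_mem : ∀ a ∈ A, ∀ (i : I) (e : E), wr a i e ∈ A

attribute [instance] FunARext.linOrdI FunARext.zeroI FunARext.botE

/-- A functional structure for the theory ARD of arrays with maxdiff: a functional
ARext-structure in which the maxdiff of any two arrays of `A` is defined. -/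
structure FunARD extends FunARext.{u, v} where
  diff_total : ∀ a ∈ A, ∀ b ∈ A, ∃ d : I, IsDiff d a b

/-- An embedding of functional ARext-structures: an order embedding `f` of indexes preserving
`0`, an injective map `g` of elements preserving `⊥`, and a map `h` of arrays mapping `A` into
`A'` and commuting with reads, with `ε`, and with writes. -/
structure ARextEmbedding (S : FunARext.{u₁, v₁}) (T : FunARext.{u₂, v₂}) :
    Type (max u₁ v₁ u₂ v₂) where
  f : S.I ↪o T.I
  map_zero : f 0 = 0
  g : S.E → T.E
  g_injective : Function.Injective g
  map_bot : g ⊥ = ⊥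
  h : (S.I → S.E) → (T.I → T.E)
  h_mem : ∀ a ∈ S.A, h a ∈ T.A
  h_read : ∀ a ∈ S.A, ∀ i : S.I, h a (f i) = g (a i)
  h_eps : h (fun _ : S.I => (⊥ : S.E)) = fun _ : T.I => (⊥ : T.E)
  h_wr : ∀ a ∈ S.A, ∀ (i : S.I) (e : S.E), h (wr a i e) = wr (h a) (f i) (g e)

/-- An embedding is *diff-faithful* if it preserves maxdiffs of arrays of `A`. -/
def ARextEmbedding.DiffFaithful {S : FunARext.{u₁, v₁}} {T : FunARext.{u₂, v₂}}
    (em : ARextEmbedding S T) : Prop :=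
  ∀ a ∈ S.A, ∀ b ∈ S.A, ∀ d : S.I, IsDiff d a b → IsDiff (em.f d) (em.h a) (em.h b)

/-- An embedding of functional ARD-structures: a diff-faithful embedding of the underlying
functional ARext-structures. -/
structure ARDEmbedding (S : FunARD.{u₁, v₁}) (T : FunARD.{u₂, v₂})
    extends ARextEmbedding S.toFunARext T.toFunARext where
  diff_faithful : toARextEmbedding.DiffFaithful

namespace ArextAux

/-- Cuts: lower sets containing `0` without maximum. -/
def Cut (I : Type u) [LinearOrder I] [Zero I] : Type u :=
  {c : LowerSet I // (0 : I) ∈ c ∧ ∀ i ∈ c, ∃ j ∈ c, i < j}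

/-- Eventual agreement below the cut. -/
def Agr {I : Type u} {E : Type v} [LinearOrder I] [Zero I] (c : Cut I) (a b : I → E) : Prop :=
  ∃ i ∈ c.1, ∀ j ∈ c.1, i ≤ j → a j = b j

theorem Agr.refl {I : Type u} {E : Type v} [LinearOrder I] [Zero I] (c : Cut I) (a : I → E) :
    Agr c a a := ⟨0, c.2.1, fun _ _ _ => rfl⟩

theorem Agr.symm {I : Type u} {E : Type v} [LinearOrder I] [Zero I] {c : Cut I} {a b : I → E}
    (h : Agr c a b) : Agr c b a := by
  obtain ⟨i, hi, h⟩ := h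
  exact ⟨i, hi, fun j hj hij => (h j hj hij).symm⟩

theorem Agr.trans {I : Type u} {E : Type v} [LinearOrder I] [Zero I] {c : Cut I} {a b d : I → E}
    (h : Agr c a b) (h' : Agr c b d) : Agr c a d := by
  obtain ⟨i, hi, h⟩ := h
  obtain ⟨i', hi', h'⟩ := h'
  refine ⟨max i i', ?_, fun j hj hij => ?_⟩
  · rcases max_choice i i' with e | e <;> rw [e] <;> assumption
  · exact (h j hj (le_trans (le_max_left _ _) hij)).trans
      (h' j hj (le_trans (le_max_right _ _) hij))

/-- Blocks. -/
abbrev K (I : Type u) (E : Type v) : Type (max u v) := ℕ × (I → E)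

/-- The extended index type. -/
def Idx (I : Type u) (E : Type v) [LinearOrder I] [Zero I] : Type (max u v) :=
  I ⊕ (Cut I × K I E)

noncomputable def kOrd (I : Type u) (E : Type v) : LinearOrder (K I E) :=
  (exists_wellFoundedLT (K I E)).choose

theorem kOrd_wf (I : Type u) (E : Type v) : letI := kOrd I E; WellFoundedLT (K I E) :=
  (exists_wellFoundedLT (K I E)).choose_spec

open Classical in
/-- The key of an index. -/
noncomputable def key {I : Type u} {E : Type v} [LinearOrder I] [Zero I] [Bot E] :
    letI := kOrd I E
    Idx I E → LowerSet I ×ₗ (K I E)ᵒᵈ := fun p =>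
  match p with
  | Sum.inl i => toLex (LowerSet.Iic i, OrderDual.toDual (0, fun _ => ⊥))
  | Sum.inr (c, k) => toLex (c.1, OrderDual.toDual k)

theorem Iic_inj {I : Type u} [LinearOrder I] {i j : I} (h : LowerSet.Iic i = LowerSet.Iic j) :
    i = j := by
  have h1 : i ∈ LowerSet.Iic j := h ▸ (le_refl i : i ∈ LowerSet.Iic i)
  have h2 : j ∈ LowerSet.Iic i := h ▸ (le_refl j : j ∈ LowerSet.Iic j)
  exact le_antisymm h1 h2

theorem cut_ne {I : Type u} [LinearOrder I] [Zero I] (c : Cut I) (i : I) :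
    c.1 ≠ LowerSet.Iic i := by
  intro h
  obtain ⟨j, hj, hij⟩ := c.2.2 i (by rw [h]; exact (le_refl i))
  rw [h] at hj
  exact absurd hij (not_lt.2 hj)

theorem key_inj {I : Type u} {E : Type v} [LinearOrder I] [Zero I] [Bot E] :
    Function.Injective (key (I := I) (E := E)) := by
  rintro (i | ⟨c, k⟩) (j | ⟨c', k'⟩) h
  · have := congrArg (fun x => (ofLex x).1) h
    exact congrArg _ (Iic_inj this)
  · have := congrArg (fun x => (ofLex x).1) h
    exact absurd this.symm (cut_ne _ _)
  · have := congrArg (fun x => (ofLex x).1) h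
    exact absurd this (cut_ne _ _)
  · have h1 := congrArg (fun x => (ofLex x).1) h
    have h2 := congrArg (fun x => (ofLex x).2) h
    have h1 : c = c' := Subtype.ext h1
    have h2 : k = k' := h2
    rw [h1, h2]

noncomputable instance idxOrd {I : Type u} {E : Type v} [LinearOrder I] [Zero I] [Bot E] :
    LinearOrder (Idx I E) := by
  classical
  letI := kOrd I E
  exact LinearOrder.lift' key key_inj

instance {I : Type u} {E : Type v} [LinearOrder I] [Zero I] : Zero (Idx I E) := ⟨Sum.inl 0⟩

section
variable {I : Type u} {E : Type v} [LinearOrder I] [Zero I] [Bot E]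

/-- old index -/
def old (i : I) : Idx I E := Sum.inl i
/-- new index -/
def new (c : Cut I) (k : K I E) : Idx I E := Sum.inr (c, k)

theorem lt_key {p q : Idx I E} : p < q ↔ 
    letI := kOrd I E
    key p < key q := Iff.rfl

theorem old_lt_old {i j : I} : (old i : Idx I E) < old j ↔ i < j := by
  let := kOrd I E
  rw [lt_key]
  simp only [key, old, Prod.Lex.toLex_lt_toLex, lt_irrefl, and_false, or_false]
  constructor
  · intro h
    by_contra hh
    exact absurd h (not_lt.2 (LowerSet.Iic_le.2 (not_lt.1 hh)))
  · intro h
    refine lt_of_le_of_ne (LowerSet.Iic_le.2 h.le) (fun e => h.ne (Iic_inj e))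

theorem old_lt_new {i : I} {c : Cut I} {k : K I E} : (old i : Idx I E) < new c k ↔ i ∈ c.1 := by
  let := kOrd I E
  rw [lt_key]
  simp only [key, old, new, Prod.Lex.toLex_lt_toLex, (cut_ne c i).symm, false_and, or_false]
  rw [← LowerSet.Iic_le]
  exact ⟨fun h => h.le, fun h => lt_of_le_of_ne h (cut_ne c i).symm⟩

theorem new_lt_new {c : Cut I} {k k' : K I E} : new c k < new c k' ↔
    letI := kOrd I E
    k' < k := by
  let := kOrd I E
  rw [lt_key]
  simp only [key, new, Prod.Lex.toLex_lt_toLex, lt_irrefl, false_or, true_and,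
    OrderDual.toDual_lt_toDual]

theorem zero_def : (0 : Idx I E) = old 0 := rfl

open Classical in
/-- a nontrivial element if any -/
noncomputable def e1 (E : Type v) [Bot E] : E := if h : ∃ e : E, e ≠ ⊥ then h.choose else ⊥

theorem e1_ne {x y : E} (h : x ≠ y) : e1 E ≠ ⊥ := by
  have h : ∃ e : E, e ≠ ⊥ := by
    by_contra hh
    push Not at hh
    exact h ((hh x).trans (hh y).symm)
  rw [e1, dif_pos h]
  exact h.choose_spec

open Classical in
/-- the code of an array at new indices -/
noncomputable def code (a : I → E) (p : Cut I × K I E) : E :=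
  if Agr p.1 a p.2.2 ∧ ¬ Agr p.1 (fun _ => ⊥) p.2.2 then e1 E else ⊥

theorem code_congr {a b : I → E} {c : Cut I} {k : K I E} (h : Agr c a b) :
    code a (c, k) = code b (c, k) := by
  have : Agr c a k.2 ↔ Agr c b k.2 := ⟨fun h' => h.symm.trans h', fun h' => h.trans h'⟩
  classical
  exact if_congr (and_congr_left' this) rfl rfl

theorem code_eps (p : Cut I × K I E) : code (fun _ => ⊥) p = (⊥ : E) := by
  simp [code]

theorem code_ne {a b : I → E} {c : Cut I} (he : e1 E ≠ ⊥) (h : ¬ Agr c a b) :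
    {k : K I E | code a (c, k) ≠ code b (c, k)}.Infinite := by
  have key : ∃ d : I → E, ∀ n : ℕ, code a (c, (n, d)) ≠ code b (c, (n, d)) := by
    by_cases ha : Agr c (fun _ => ⊥) a
    · refine ⟨b, fun n => ?_⟩
      have hb : ¬ Agr c (fun _ => ⊥) b := fun hb => h (ha.symm.trans hb)
      simp [code, h, hb, Agr.refl, he.symm]
    · refine ⟨a, fun n => ?_⟩
      have h' : ¬ Agr c b a := fun hb => h hb.symm
      simp [code, h', ha, Agr.refl, he]
  obtain ⟨d, hd⟩ := key
  exact Set.infinite_of_injective_forall_mem (f := fun n : ℕ => ((n, d) : K I E))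
    (fun m n hmn => congrArg Prod.fst hmn) hd

theorem agr_wr (c : Cut I) (a : I → E) (i : I) (e : E) : Agr c (wr a i e) a := by
  unfold wr
  split_ifs with h0
  swap
  · exact Agr.refl _ _
  by_cases hi : i ∈ c.1
  · obtain ⟨j, hj, hij⟩ := c.2.2 i hi
    refine ⟨j, hj, fun l _ hl => ?_⟩
    rw [Function.update_of_ne (hij.trans_le hl).ne']
  · refine ⟨0, c.2.1, fun l hl _ => ?_⟩
    rw [Function.update_of_ne]
    rintro rfl
    exact hi hl

theorem code_wr (a : I → E) (i : I) (e : E) : code (wr a i e) = code a := by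
  funext ⟨c, k⟩
  exact code_congr (agr_wr c a i e)

/-- array extension -/
noncomputable def ext (a : I → E) : Idx I E → E := Sum.elim a (code a)

/-- new arrays -/
def newA (A : Set (I → E)) : Set (Idx I E → E) :=
  {x | (fun i => x (old i)) ∈ A ∧
    {p : Cut I × K I E | x (new p.1 p.2) ≠ code (fun i => x (old i)) p}.Finite}

theorem old_nonneg {i : I} : (0 : Idx I E) ≤ old i ↔ 0 ≤ i := by
  rw [← not_lt, ← not_lt, zero_def, old_lt_old]

theorem wr_old (x : Idx I E → E) (i : I) (e : E) :
    (fun j => wr x (old i) e (old j)) = wr (fun j => x (old j)) i e := by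
  funext j
  simp only [wr, old_nonneg]
  split_ifs
  · by_cases hj : j = i
    · subst hj
      rw [Function.update_self, Function.update_self]
    · have hj' : (old j : Idx I E) ≠ old i := fun h => hj (Sum.inl_injective h)
      rw [Function.update_of_ne hj, Function.update_of_ne hj']
  · rfl

theorem wr_ne {J : Type*} [LinearOrder J] [Zero J] (x : J → E) {i j : J} (h : j ≠ i) (e : E) :
    wr x i e j = x j := by
  unfold wr
  split_ifs
  · exact Function.update_of_ne h _ _
  · rfl

theorem ext_wr (a : I → E) (i : I) (e : E) : ext (wr a i e) = wr (ext a) (old i) e := by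
  funext p
  rcases p with j | p
  · exact (congrFun (wr_old (ext a) i e) j).symm
  · have h : (new p.1 p.2 : Idx I E) ≠ old i := fun h => by cases h
    exact (congrFun (code_wr a i e) p).trans (wr_ne (ext a) h e).symm

theorem newA_wr {A : Set (I → E)} (hA : ∀ a ∈ A, ∀ (i : I) (e : E), wr a i e ∈ A)
    (x : Idx I E → E) (hx : x ∈ newA A) (p : Idx I E) (e : E) : wr x p e ∈ newA A := by
  obtain ⟨h1, h2⟩ := hx
  rcases p with i | q
  · change wr x (old i) e ∈ newA A
    refine ⟨?_, ?_⟩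
    · rw [wr_old]; exact hA _ h1 i e
    · rw [wr_old, code_wr]
      refine h2.subset (fun p hp => ?_)
      have := wr_ne x (i := old i) (j := new p.1 p.2) (fun h => by cases h) e
      simpa only [Set.mem_setOf_eq, this] using hp
  · have h3 : (fun i => wr x (Sum.inr q : Idx I E) e (old i)) = fun i => x (old i) := by
      funext i
      exact wr_ne x (fun h => by cases h) e
    refine ⟨by rw [h3]; exact h1, ?_⟩
    rw [h3]
    refine (h2.union (Set.finite_singleton q)).subset (fun p hp => ?_)
    by_cases hpq : p = q
    · exact Or.inr hpq
    · left
      have := wr_ne x (i := (Sum.inr q : Idx I E)) (j := new p.1 p.2)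
        (fun h => hpq (Sum.inr_injective h)) e
      simpa only [Set.mem_setOf_eq, this] using hp

theorem exists_diff {J : Type*} [LinearOrder J] [Zero J] (x y : J → E) (U : Set J)
    (hU : U ⊆ {p | x p ≠ y p}) (hup : ∀ p ∈ U, ∀ q, p < q → x q ≠ y q → q ∈ U)
    (hne : U.Nonempty) (hwf : U.WellFoundedOn (· > ·)) : ∃ d, IsDiff d x y := by
  obtain ⟨p0, hp0⟩ := hne
  obtain ⟨⟨m, hm⟩, -, hmax⟩ := WellFounded.has_min hwf Set.univ ⟨⟨p0, hp0⟩, trivial⟩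
  refine ⟨m, Or.inr ⟨hU hm, fun j hj => ?_⟩⟩
  by_contra hh
  exact hmax ⟨j, hup m hm j hj hh⟩ trivial hj

theorem agr_of_above {a b : I → E} {c : Cut I} {d : I} (hd : d ∈ c.1)
    (h : ∀ j, d < j → a j = b j) : Agr c a b := by
  obtain ⟨j, hj, hdj⟩ := c.2.2 d hd
  exact ⟨j, hj, fun l _ hl => h l (hdj.trans_le hl)⟩

theorem block_wf (c : Cut I) :
    (Set.range (fun k : K I E => new c k)).WellFoundedOn (· > ·) := by
  letI := kOrd I E
  haveI : WellFoundedLT (K I E) := kOrd_wf I E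
  rw [Set.wellFoundedOn_range]
  have : (Function.onFun (fun x y : Idx I E => x > y) (fun k : K I E => new c k)) = (· < ·) := by
    funext k k'
    exact propext new_lt_new
  rw [this]
  exact wellFounded_lt

theorem newA_diff {A : Set (I → E)} (hA : ∀ a ∈ A, PosSupport a)
    (x : Idx I E → E) (hx : x ∈ newA A) (y : Idx I E → E) (hy : y ∈ newA A) :
    ∃ d, IsDiff d x y := by
  obtain ⟨hx1, hx2⟩ := hx
  obtain ⟨hy1, hy2⟩ := hy
  set a : I → E := fun i => x (old i) with ha
  set b : I → E := fun i => y (old i) with hb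
  -- the exceptional finite set
  set F : Set (Idx I E) := (fun p : Cut I × K I E => (new p.1 p.2 : Idx I E)) ''
    ({p | x (new p.1 p.2) ≠ code a p} ∪ {p | y (new p.1 p.2) ≠ code b p}) with hF
  have hFfin : F.Finite := (hx2.union hy2).image _
  have hFmem : ∀ c k, x (new c k) ≠ y (new c k) → code a (c, k) = code b (c, k) →
      new c k ∈ F := by
    intro c k h1 h2
    refine ⟨(c, k), ?_, rfl⟩
    by_contra hh
    simp only [Set.mem_union, Set.mem_setOf_eq, not_or, not_not] at hh
    exact h1 (by rw [hh.1, hh.2, h2])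
  by_cases hxy : x = y
  · exact ⟨0, Or.inl ⟨hxy, rfl⟩⟩
  obtain ⟨p0, hp0⟩ := Function.ne_iff.1 hxy
  by_cases hab : a = b
  · refine exists_diff x y {p | x p ≠ y p} subset_rfl (fun _ _ q _ h => h) ⟨p0, hp0⟩ ?_
    refine (hFfin.subset ?_).wellFoundedOn
    rintro (i | ⟨c, k⟩) hp
    · exact absurd (congrFun hab i) hp
    · exact hFmem c k hp (by rw [hab])
  by_cases hmax : ∃ d, a d ≠ b d ∧ ∀ j, d < j → a j = b j
  · obtain ⟨d, hd, hd'⟩ := hmax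
    refine exists_diff x y {p | x p ≠ y p ∧ old d ≤ p} (fun p hp => hp.1)
      (fun p hp q hpq h => ⟨h, hp.2.trans hpq.le⟩) ⟨old d, hd, le_rfl⟩ ?_
    refine ((hFfin.union (Set.finite_singleton (old d))).subset ?_).wellFoundedOn
    rintro (i | ⟨c, k⟩) ⟨hp, hp'⟩
    · right
      rcases hp'.eq_or_lt with h | h
      · exact h.symm
      · exact absurd (hd' i (old_lt_old.1 h)) hp
    · left
      have hdc : d ∈ c.1 := old_lt_new.1 (lt_of_le_of_ne hp' (fun h => by cases h))
      exact hFmem c k hp (code_congr (agr_of_above hdc hd'))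
  push Not at hmax
  obtain ⟨j0, hj0⟩ := Function.ne_iff.1 hab
  let c : Cut I := ⟨⟨{i | ∃ j, i ≤ j ∧ a j ≠ b j},
      fun i i' hi ⟨j, hj, h⟩ => ⟨j, hi.trans hj, h⟩⟩, by
    refine ⟨⟨j0, ?_, hj0⟩, ?_⟩
    · by_contra hh
      have hh := not_le.1 hh
      exact hj0 ((hA a hx1 j0 hh).trans (hA b hy1 j0 hh).symm)
    · rintro i ⟨j, hj, h⟩
      obtain ⟨l, hl, hl'⟩ := hmax j h
      exact ⟨l, ⟨l, le_rfl, hl'⟩, hj.trans_lt hl⟩⟩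
  have hc : ∀ i, i ∈ c.1 ↔ ∃ j, i ≤ j ∧ a j ≠ b j := fun i => Iff.rfl
  have hnag : ¬ Agr c a b := by
    rintro ⟨i, hi, h⟩
    obtain ⟨j, hj, hjne⟩ := (hc i).1 hi
    exact hjne (h j ((hc j).2 ⟨j, le_rfl, hjne⟩) hj)
  have hinf := code_ne (e1_ne hj0) hnag
  refine exists_diff x y {p | x p ≠ y p ∧ ∀ i ∈ c.1, old i < p} (fun p hp => hp.1)
      (fun p hp q hpq h => ⟨h, fun i hi => (hp.2 i hi).trans hpq⟩) ?_ ?_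
  · have hfin : {k : K I E | (new c k : Idx I E) ∈ F}.Finite :=
      hFfin.preimage (fun k _ k' _ h => (Prod.ext_iff.1 (Sum.inr_injective h)).2)
    obtain ⟨k, hk, hk'⟩ := (hinf.diff hfin).nonempty
    refine ⟨new c k, ?_, fun i hi => old_lt_new.2 hi⟩
    intro hh
    apply hk'
    refine ⟨(c, k), ?_, rfl⟩
    by_contra h3
    simp only [Set.mem_union, Set.mem_setOf_eq, not_or, not_not] at h3
    exact hk (by rw [← h3.1, ← h3.2, hh])
  · refine Set.WellFoundedOn.subset (hFfin.wellFoundedOn.union (block_wf c)) ?_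
    rintro (i | ⟨c', k⟩) ⟨hp, hp'⟩
    · have : i ∈ c.1 := (hc i).2 ⟨i, le_rfl, hp⟩
      exact absurd (hp' i this) (lt_irrefl _)
    · have hle : ∀ i ∈ c.1, i ∈ c'.1 := fun i hi => old_lt_new.1 (hp' i hi)
      by_cases hcc : ∃ i ∈ c'.1, i ∉ c.1
      · left
        obtain ⟨i, hi, hi'⟩ := hcc
        refine hFmem c' k hp (code_congr (agr_of_above hi fun j hj => ?_))
        by_contra hh
        exact hi' ((hc i).2 ⟨j, hj.le, hh⟩)
      · right
        push Not at hcc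
        have : c = c' := Subtype.ext (SetLike.ext fun i => ⟨hle i, hcc i⟩)
        subst this
        exact ⟨k, rfl⟩

theorem ext_mem {A : Set (I → E)} {a : I → E} (ha : a ∈ A) : ext a ∈ newA A := by
  refine ⟨ha, ?_⟩
  convert Set.finite_empty
  ext p
  simp only [Set.mem_setOf_eq, Set.mem_empty_iff_false, iff_false, not_not]
  rfl

theorem ext_eps : ext (fun _ : I => (⊥ : E)) = fun _ => ⊥ := by
  funext p
  rcases p with i | p
  · rfl
  · exact code_eps p

theorem ext_diff {a b : I → E} {d : I} (h : IsDiff d a b) : IsDiff (old d) (ext a) (ext b) := by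
  rcases h with ⟨h, h'⟩ | ⟨h, h'⟩
  · left
    subst h h'
    exact ⟨rfl, rfl⟩
  · refine Or.inr ⟨h, ?_⟩
    rintro (i | ⟨c, k⟩) hj
    · exact h' i (old_lt_old.1 hj)
    · exact code_congr (agr_of_above (old_lt_new.1 hj) h')

end

/-- the extended structure -/
noncomputable def ext_struct (S : FunARext.{u, v}) : FunARD.{max u v, v} where
  I := Idx S.I S.E
  E := S.E
  A := newA S.A
  posSupport := by
    rintro x ⟨hx, -⟩ (i | ⟨c, k⟩) hp
    · exact S.posSupport _ hx i (old_lt_old.1 hp)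
    · exact absurd (old_lt_new.2 c.2.1) (not_lt.2 hp.le)
  eps_mem := by
    rw [← ext_eps]
    exact ext_mem S.eps_mem
  wr_mem := newA_wr S.wr_mem
  diff_total := newA_diff S.posSupport

/-- the embedding -/
noncomputable def ext_emb (S : FunARext.{u, v}) :
    ARextEmbedding S (ext_struct S).toFunARext where
  f := OrderEmbedding.ofStrictMono (fun i : S.I => (old i : Idx S.I S.E))
    (fun _ _ h => old_lt_old.2 h)
  map_zero := rfl
  g := id
  g_injective := Function.injective_id
  map_bot := rfl
  h := ext
  h_mem := fun _ ha => ext_mem ha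
  h_read := fun _ _ _ => rfl
  h_eps := ext_eps
  h_wr := fun a _ i e => ext_wr a i e

end ArextAux

/-- every functional ARext-structure admits a diff-faithful embedding into a
functional ARD-structure. -/
theorem arext_embeds_into_ard (S : FunARext.{u, v}) :
    ∃ (S' : FunARD.{max u v, v}) (em : ARextEmbedding S S'.toFunARext),
      em.DiffFaithful :=
  ⟨ArextAux.ext_struct S, ArextAux.ext_emb S, fun _ _ _ _ _ h => ArextAux.ext_diff h⟩
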